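/- Let A be a unital C*-algebra, n,m ≥ 1, q ∈ ℂ, and let s_1,…,s_n, t_1,…,t_m ∈ A satisfy the E_{n,m}^q-relations. Then for the elements t̃_l = (1−Q) t_l one has: s_i* t̃_l = 0 for all i = 1,…,n and l = 1,…,m; t̃_r* t̃_l = 0 for all r ≠ l; and t̃_r* t̃_r = 1 − |q|² Q for all r = 1,…,m. -/

import Mathlib

open scoped BigOperators

/-!
The isometries `s i` have orthogonal ranges, so `Q = ∑ i, s i * star (s i)` is a projection that
every `star (s i)` absorbs; hence `star (s i) * (1 - Q) = 0`. As `1 - Q` is a projection too,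
`star ((1 - Q) * x) * ((1 - Q) * y) = star x * y - star x * Q * y`, and moving `x` and `y` past
the `s i` by the `q`-commutation relation and its adjoint turns the last term into
`(star q * q) • ∑ i, s i * (star x * y) * star (s i)`.
-/

theorem star_mul_mul_mul_of_isStarProjection {A : Type*} [Semigroup A] [StarMul A] {p : A}
    (hp : IsStarProjection p) (x y : A) : star (p * x) * (p * y) = star x * p * y := by
  rw [star_mul, hp.isSelfAdjoint.star_eq, mul_assoc, ← mul_assoc p, hp.isIdempotentElem.eq,
    ← mul_assoc]

section RangeSum

variable {ι κ R A : Type*} [Fintype ι]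

section NonUnital

variable [NonUnitalSemiring A] [StarRing A]

/-- The sum of the elements `s i * star (s i)`, written `Q` in the paper. When the `s i` are
isometries with mutually orthogonal ranges, it is the projection onto the span of these ranges;
the definition itself assumes nothing about `s`. -/
def rangeSum (s : ι → A) : A := ∑ i, s i * star (s i)

theorem isSelfAdjoint_rangeSum (s : ι → A) : IsSelfAdjoint (rangeSum s) :=
  isSelfAdjoint_sum _ fun i _ => IsSelfAdjoint.mul_star_self (s i)

theorem star_mul_rangeSum_mul [CommSemiring R] [StarRing R] [Module R A] [IsScalarTower R A A]
    [SMulCommClass R A A] [StarModule R A] {q : R} {s : ι → A} {x y : A}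
    (hx : ∀ i, star (s i) * x = q • (x * star (s i)))
    (hy : ∀ i, star (s i) * y = q • (y * star (s i))) :
    star x * rangeSum s * y = (star q * q) • ∑ i, s i * (star x * y) * star (s i) := by
  have hx_star (i : ι) : star x * s i = star q • (s i * star x) := by
    simpa only [star_mul, star_star, star_smul] using congrArg star (hx i)
  rw [rangeSum, Finset.mul_sum, Finset.sum_mul, Finset.smul_sum]
  refine Finset.sum_congr rfl fun i _ => ?_
  calc star x * (s i * star (s i)) * y
      = (star x * s i) * (star (s i) * y) := by simp only [mul_assoc]
    _ = (star q * q) • (s i * (star x * y) * star (s i)) := by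
        rw [hx_star, hy, smul_mul_smul_comm]
        simp only [mul_assoc]

end NonUnital

section Semiring

variable [DecidableEq ι] [Semiring A] [StarRing A] {s : ι → A}

theorem star_mul_rangeSum (hs : ∀ i j, star (s i) * s j = if i = j then 1 else 0) (i : ι) :
    star (s i) * rangeSum s = star (s i) := by
  simp [rangeSum, Finset.mul_sum, ← mul_assoc, hs]

theorem isStarProjection_rangeSum (hs : ∀ i j, star (s i) * s j = if i = j then 1 else 0) :
    IsStarProjection (rangeSum s) where
  isIdempotentElem := calc
    rangeSum s * rangeSum s = ∑ i, s i * (star (s i) * rangeSum s) := by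
      simp only [← mul_assoc, ← Finset.sum_mul]
      rfl
    _ = rangeSum s := by
      simp only [star_mul_rangeSum hs]
      rfl
  isSelfAdjoint := isSelfAdjoint_rangeSum s

end Semiring

section Ring

variable [DecidableEq ι] [Ring A] [StarRing A] {s : ι → A}

theorem star_mul_one_sub_rangeSum (hs : ∀ i j, star (s i) * s j = if i = j then 1 else 0)
    (i : ι) : star (s i) * (1 - rangeSum s) = 0 := by
  rw [mul_sub, mul_one, star_mul_rangeSum hs, sub_self]

variable [CommSemiring R] [StarRing R] [Algebra R A] [StarModule R A] {q : R}

theorem star_one_sub_rangeSum_mul_mul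
    (hs : ∀ i j, star (s i) * s j = if i = j then 1 else 0) {x y : A}
    (hx : ∀ i, star (s i) * x = q • (x * star (s i)))
    (hy : ∀ i, star (s i) * y = q • (y * star (s i))) :
    star ((1 - rangeSum s) * x) * ((1 - rangeSum s) * y) =
      star x * y - (star q * q) • ∑ i, s i * (star x * y) * star (s i) := by
  rw [star_mul_mul_mul_of_isStarProjection (isStarProjection_rangeSum hs).one_sub, mul_sub, mul_one,
    sub_mul, star_mul_rangeSum_mul hx hy]

theorem stmt_3_general [DecidableEq κ] {t : κ → A}
    (hs : ∀ i j, star (s i) * s j = if i = j then 1 else 0)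
    (ht : ∀ r l, star (t r) * t l = if r = l then 1 else 0)
    (hst : ∀ i r, star (s i) * t r = q • (t r * star (s i))) :
    (∀ i l, star (s i) * ((1 - rangeSum s) * t l) = 0) ∧
    (∀ r l, r ≠ l → star ((1 - rangeSum s) * t r) * ((1 - rangeSum s) * t l) = 0) ∧
    (∀ r, star ((1 - rangeSum s) * t r) * ((1 - rangeSum s) * t r) =
      1 - (star q * q) • rangeSum s) := by
  have gram (r l : κ) := star_one_sub_rangeSum_mul_mul hs (hst · r) (hst · l)
  refine ⟨fun i l => ?_, fun r l hrl => ?_, fun r => ?_⟩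
  · rw [← mul_assoc, star_mul_one_sub_rangeSum hs, zero_mul]
  · rw [gram, ht, if_neg hrl]
    simp
  · rw [gram, ht, if_pos rfl]
    simp [rangeSum]

end Ring

end RangeSum

theorem stmt_3 {A : Type*} [NormedRing A] [StarRing A] [CStarRing A]
    [NormedAlgebra ℂ A] [StarModule ℂ A] [CompleteSpace A]
    {n m : ℕ} (hn : 1 ≤ n) (hm : 1 ≤ m) (q : ℂ)
    (s : Fin n → A) (t : Fin m → A)
    (hs : ∀ i j : Fin n, star (s i) * s j = if i = j then 1 else 0)
    (ht : ∀ r l : Fin m, star (t r) * t l = if r = l then 1 else 0)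
    (hst : ∀ (j : Fin n) (r : Fin m), star (s j) * t r = q • (t r * star (s j)))
    (Q : A) (hQ : Q = ∑ i : Fin n, s i * star (s i))
    (tt : Fin m → A) (htt : ∀ l, tt l = (1 - Q) * t l) :
    (∀ (i : Fin n) (l : Fin m), star (s i) * tt l = 0) ∧
    (∀ r l : Fin m, r ≠ l → star (tt r) * tt l = 0) ∧
    (∀ r : Fin m, star (tt r) * tt r = 1 - ((‖q‖ ^ 2 : ℝ) : ℂ) • Q) := by
  have norm_sq : ((‖q‖ ^ 2 : ℝ) : ℂ) = star q * q := by
    rw [Complex.star_def, Complex.conj_mul', Complex.ofReal_pow]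
  simpa only [htt, norm_sq, hQ, rangeSum] using stmt_3_general hs ht hst
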